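/- (Proposition 2.6, decay in the region ahead of the wave.) There is a constant C such that, for ε₁ sufficiently small: if u is a classical solution of mKdV on [0,∞) satisfying ‖u‖_X ≤ ε₁, then for every t ≥ 2 and every x ≥ t^{1/3}, |u(t,x)| ≤ C ε₁ t^{-1/3} (x/t^{1/3})^{-3/4}. -/

import Mathlib

/-!
The bound is a linear estimate at a fixed time. Since `û = e^{itξ³} f̂`, Fourier inversion gives
`u(t,x) = (2π)^{-1/2} ∫ e^{i(xξ + tξ³)} f̂(t,ξ) dξ`, and for `x > 0` the phase derivative
`x + 3tξ²` never vanishes. One integration by parts (`nonstationary`) produces two terms. The one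
with `∂_ξ f̂` is bounded by Cauchy–Schwarz, using
`‖(x + 3tξ²)⁻¹‖_{L²} ≲ x^{-3/4} t^{-1/4}` and `‖∂_ξ f̂‖_{L²} = ‖x f‖_{L²} ≤ ε₁ t^{1/6}` (Plancherel,
`L2norm_mul_prof`); this is exactly `ε₁ t^{-1/3} (x/t^{1/3})^{-3/4}` up to a constant. The one with
`φ''/φ'²` is at most `π ‖f̂‖_{L^∞} / x ≤ π ε₁ / x`, which is smaller when `x ≥ t^{1/3}`.

All manipulations take place among Schwartz functions: `f̂(t)` is the product of a Schwartz function
and the temperate-growth function `e^{-itξ³}` (`exists_schwartz_profFT`).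
-/

noncomputable section

open MeasureTheory Real Complex

/-- Fourier transform: ĝ(ξ) = (2π)^{-1/2} ∫ e^{-ixξ} g(x) dx. -/
def FT (g : ℝ → ℂ) (ξ : ℝ) : ℂ :=
  (Real.sqrt (2 * Real.pi) : ℂ)⁻¹ * ∫ x : ℝ, Complex.exp (-(Complex.I * x * ξ)) * g x

/-- L² norm. -/
def L2norm (g : ℝ → ℂ) : ℝ := Real.sqrt (∫ x : ℝ, ‖g x‖ ^ 2)

/-- L^∞ norm (as a pointwise supremum). -/
def LinfNorm (g : ℝ → ℂ) : ℝ := ⨆ x : ℝ, ‖g x‖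

/-- H¹ norm: ‖g‖_{H¹}² = ‖g‖_{L²}² + ‖g'‖_{L²}². -/
def H1norm (g : ℝ → ℂ) : ℝ := Real.sqrt (L2norm g ^ 2 + L2norm (deriv g) ^ 2)

/-- `u` is a classical solution of the (focusing) mKdV equation
`∂ₜu + ∂ₓ³u + ∂ₓ(u³) = 0` on the time set `s`: it is smooth, Schwartz in space
for each time in `s`, and solves the equation pointwise. -/
def IsMKdVOn (u : ℝ → ℝ → ℝ) (s : Set ℝ) : Prop :=
  ContDiffOn ℝ (⊤ : ℕ∞) (Function.uncurry u) (s ×ˢ Set.univ) ∧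
  (∀ t ∈ s, ∃ g : SchwartzMap ℝ ℝ, ∀ x, u t x = g x) ∧
  (∀ t ∈ s, ∀ x : ℝ,
    deriv (fun t' => u t' x) t + iteratedDeriv 3 (fun y => u t y) x
      + deriv (fun y => (u t y) ^ 3) x = 0)

/-- Fourier transform of the profile: f̂(t,ξ) = e^{-itξ³} û(t,ξ). -/
def profFT (u : ℝ → ℝ → ℝ) (t ξ : ℝ) : ℂ :=
  Complex.exp (-(Complex.I * t * ξ ^ 3)) * FT (fun x => (u t x : ℂ)) ξ

/-- The profile f(t) = e^{t∂ₓ³}u(t) in physical space (inverse Fourier transform of `profFT`). -/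
def prof (u : ℝ → ℝ → ℝ) (t x : ℝ) : ℂ :=
  (Real.sqrt (2 * Real.pi) : ℂ)⁻¹ * ∫ ξ : ℝ, Complex.exp (Complex.I * x * ξ) * profFT u t ξ

/-- The quantity inside the supremum defining the X-norm of `u`, at time `t`:
`t^{-δ}‖u(t)‖_{H¹} + t^{-1/6}‖x f(t)‖_{H¹} + t^{α/3-1/6}‖|∂ₓ|^α(x f(t))‖_{L²} + ‖f̂(t)‖_{L^∞}`,
where the `L²` norm of `|∂ₓ|^α (x f)` is expressed on the Fourier side (Plancherel). -/
def Xexpr (δ α : ℝ) (u : ℝ → ℝ → ℝ) (t : ℝ) : ℝ :=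
  t ^ (-δ) * H1norm (fun x => (u t x : ℂ))
    + t ^ (-(1:ℝ)/6) * H1norm (fun x => (x : ℂ) * prof u t x)
    + t ^ (α/3 - 1/6) *
        L2norm (fun ξ => ((|ξ| ^ α : ℝ) : ℂ) * FT (fun x => (x : ℂ) * prof u t x) ξ)
    + LinfNorm (profFT u t)

/-- `‖u‖_X ≤ ε`, i.e. the defining expression is `≤ ε` for every `t ≥ 1`. -/
def XLE (δ α : ℝ) (u : ℝ → ℝ → ℝ) (ε : ℝ) : Prop :=
  ∀ t : ℝ, 1 ≤ t → Xexpr δ α u t ≤ ε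

/-- The weighted H¹ norm ‖⟨x⟩u₀‖_{H¹} of the initial data. -/
def initNorm (u : ℝ → ℝ → ℝ) : ℝ :=
  H1norm (fun x => ((Real.sqrt (1 + x ^ 2) * u 0 x : ℝ) : ℂ))

open scoped FourierTransform SchwartzMap

/-! ### The profile as a Schwartz function -/

theorem hasTemperateGrowth_cexp_I_mul :
    Function.HasTemperateGrowth (fun y : ℝ => cexp (I * y)) := by
  have hd : ∀ n : ℕ, iteratedDeriv n (fun y : ℝ => cexp (I * y)) =
      fun y : ℝ => I ^ n * cexp (I * y) := by
    intro n
    induction n with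
    | zero => simp
    | succ n ih =>
      rw [iteratedDeriv_succ, ih]
      funext y
      have h : HasDerivAt (fun y : ℝ => I * (y : ℂ)) (I * 1) y :=
        (hasDerivAt_id y).ofReal_comp.const_mul I
      rw [(h.cexp.const_mul (I ^ n)).deriv]
      ring
  refine ⟨(contDiff_const.mul Complex.ofRealCLM.contDiff).cexp, fun n => ⟨0, 1, fun y => ?_⟩⟩
  rw [norm_iteratedFDeriv_eq_norm_iteratedDeriv, hd]
  simp [mul_comm I, Complex.norm_exp_ofReal_mul_I]

/-- Multiplication by the linear propagator preserves Schwartz functions on the Fourier side. -/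
theorem hasTemperateGrowth_cubic_phase (t : ℝ) :
    Function.HasTemperateGrowth (fun ξ : ℝ => cexp (-(I * t * ξ ^ 3))) := by
  have h : Function.HasTemperateGrowth (fun ξ : ℝ => (-t) * ξ ^ 3) :=
    (Function.HasTemperateGrowth.const (-t)).mul (Function.HasTemperateGrowth.id'.pow 3)
  convert! hasTemperateGrowth_cexp_I_mul.comp h using 2 with ξ
  simp only [Function.comp_apply]
  push_cast
  congr 1
  ring

/-- Conversion from the unitary normalization to the `e^{-2πixξ}` convention of `𝓕`. -/
theorem FT_eq_fourier (g : ℝ → ℂ) (ξ : ℝ) :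
    FT g ξ = (Real.sqrt (2 * Real.pi) : ℂ)⁻¹ * 𝓕 g (ξ / (2 * Real.pi)) := by
  rw [FT, Real.fourier_real_eq_integral_exp_smul]
  congr 2
  funext x
  rw [smul_eq_mul]
  congr 2
  have : (Real.pi : ℂ) ≠ 0 := by exact_mod_cast Real.pi_ne_zero
  push_cast
  field_simp

/-- The unnormalized inverse transform defining `prof`, in terms of `𝓕` at a reflected point. -/
theorem inverse_eq_fourier (h : ℝ → ℂ) (x : ℝ) :
    ∫ ξ : ℝ, cexp (I * x * ξ) * h ξ = 𝓕 h (-x / (2 * Real.pi)) := by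
  rw [Real.fourier_real_eq_integral_exp_smul]
  congr 1
  funext ξ
  rw [smul_eq_mul]
  congr 2
  have : (Real.pi : ℂ) ≠ 0 := by exact_mod_cast Real.pi_ne_zero
  push_cast
  field_simp

/-- Fourier inversion in the unitary normalization, for Schwartz functions. -/
theorem inversion (g : 𝓢(ℝ, ℂ)) (x : ℝ) :
    g x = (Real.sqrt (2 * Real.pi) : ℂ)⁻¹ * ∫ ξ : ℝ, cexp (I * x * ξ) * FT g ξ := by
  have h2 : (0:ℝ) < 2 * Real.pi := by positivity
  have hs : ((Real.sqrt (2 * Real.pi) : ℂ))⁻¹ * (Real.sqrt (2 * Real.pi) : ℂ)⁻¹ *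
      ((2 * Real.pi : ℝ) : ℂ) = 1 := by
    rw [← mul_inv, ← Complex.ofReal_mul, Real.mul_self_sqrt h2.le]
    exact inv_mul_cancel₀ (by exact_mod_cast h2.ne')
  have hinv : 𝓕⁻ (𝓕 (g : ℝ → ℂ)) x = g x := by
    rw [g.continuous.fourierInv_fourier_eq g.integrable (by
      rw [← SchwartzMap.fourier_coe]; exact (𝓕 g).integrable)]
  have hc : ∫ ξ : ℝ, cexp (I * x * ξ) * FT g ξ =
      ∫ ξ : ℝ, (fun η : ℝ => (Real.sqrt (2 * Real.pi) : ℂ)⁻¹ *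
        (cexp ((2 * Real.pi * (η * x) : ℝ) * I) * 𝓕 (g : ℝ → ℂ) η)) (ξ / (2 * Real.pi)) := by
    congr 1
    funext ξ
    rw [FT_eq_fourier, mul_left_comm]
    congr 3
    have : (Real.pi : ℂ) ≠ 0 := by exact_mod_cast Real.pi_ne_zero
    push_cast
    field_simp
  rw [hc, Measure.integral_comp_div (fun η : ℝ => (Real.sqrt (2 * Real.pi) : ℂ)⁻¹ *
      (cexp ((2 * Real.pi * (η * x) : ℝ) * I) * 𝓕 (g : ℝ → ℂ) η)),
    integral_const_mul, abs_of_pos h2]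
  rw [← hinv, Real.fourierInv_eq']
  simp only [smul_eq_mul, real_smul, RCLike.inner_apply, conj_trivial]
  calc _ = 1 * ∫ v : ℝ, cexp ((2 * Real.pi * (x * v) : ℝ) * I) * 𝓕 (g : ℝ → ℂ) v := by
        rw [one_mul]
    _ = _ := by
        rw [← hs]
        simp only [mul_comm x]
        ring

theorem exists_schwartz_profFT (u : ℝ → ℝ → ℝ) (t : ℝ) (g : 𝓢(ℝ, ℂ))
    (hg : ∀ x, (u t x : ℂ) = g x) : ∃ H : 𝓢(ℝ, ℂ), ∀ ξ, profFT u t ξ = H ξ := by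
  have h2 : (2 * Real.pi)⁻¹ ≠ 0 := by positivity
  let e : ℝ ≃L[ℝ] ℝ := ContinuousLinearEquiv.unitsEquivAut ℝ (Units.mk0 _ h2)
  refine ⟨SchwartzMap.smulLeftCLM ℂ (fun ξ : ℝ => cexp (-(I * t * ξ ^ 3)))
    ((Real.sqrt (2 * Real.pi) : ℂ)⁻¹ •
      SchwartzMap.compCLMOfContinuousLinearEquiv ℂ e (𝓕 g)), fun ξ => ?_⟩
  rw [SchwartzMap.smulLeftCLM_apply_apply (hasTemperateGrowth_cubic_phase t), profFT]
  have : (fun x => (u t x : ℂ)) = g := funext hg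
  rw [this, FT_eq_fourier]
  simp [e, SchwartzMap.fourier_coe, div_eq_mul_inv]

/-- Plancherel: `‖x f‖_{L²} = ‖∂_ξ f̂‖_{L²}`, where `H = f̂(t)`. -/
theorem L2norm_mul_prof (u : ℝ → ℝ → ℝ) (t : ℝ) (H : 𝓢(ℝ, ℂ))
    (hH : ∀ ξ, profFT u t ξ = H ξ) :
    L2norm (fun x => (x : ℂ) * prof u t x) = L2norm (deriv H) := by
  have h2 : (0:ℝ) < 2 * Real.pi := by positivity
  have hf : profFT u t = H := funext hH
  let H' : 𝓢(ℝ, ℂ) := SchwartzMap.derivCLM ℂ ℂ H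
  have hH' : (H' : ℝ → ℂ) = deriv H := funext fun x => SchwartzMap.derivCLM_apply ℂ H x
  have hder := Real.fourier_deriv H.integrable H.differentiable (hH' ▸ H'.integrable)
  have hpt : ∀ x : ℝ, ‖(x : ℂ) * prof u t x‖ ^ 2 =
      (fun y : ℝ => (2 * Real.pi)⁻¹ * ‖𝓕 (deriv H) y‖ ^ 2) (x / (-(2 * Real.pi))) := by
    intro x
    have hx : -x / (2 * Real.pi) = x / (-(2 * Real.pi)) := by rw [div_neg, neg_div]
    simp only [prof]
    rw [hf, inverse_eq_fourier, hx, hder]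
    simp only [norm_mul, norm_smul, norm_inv, mul_pow, inv_pow, Complex.norm_real,
      Real.norm_eq_abs, sq_abs, Real.sq_sqrt h2.le, Complex.norm_I, Complex.norm_ofNat]
    field_simp
  rw [L2norm, L2norm]
  simp_rw [hpt]
  rw [Measure.integral_comp_div (fun y : ℝ => (2 * Real.pi)⁻¹ * ‖𝓕 (deriv H) y‖ ^ 2),
    integral_const_mul, abs_neg, abs_of_pos h2, smul_eq_mul,
    mul_inv_cancel_left₀ h2.ne', ← hH', ← SchwartzMap.fourier_coe,
    SchwartzMap.integral_norm_sq_fourier]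

/-! ### The weight `(1 + (sξ)²)⁻¹` and the nonstationary phase estimate -/

theorem integrable_J {s : ℝ} (hs : 0 < s) : Integrable fun ξ : ℝ => (1 + (s * ξ) ^ 2)⁻¹ :=
  integrable_inv_one_add_sq.comp_mul_left' hs.ne'

theorem integral_J {s : ℝ} (hs : 0 < s) : ∫ ξ : ℝ, (1 + (s * ξ) ^ 2)⁻¹ = Real.pi / s := by
  rw [Measure.integral_comp_mul_left (fun y : ℝ => (1 + y ^ 2)⁻¹), integral_univ_inv_one_add_sq,
    abs_of_pos (inv_pos.2 hs), smul_eq_mul]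
  ring

/-- Cauchy–Schwarz against the weight `J = (1 + (sξ)²)⁻¹`, using `J² ≤ J` and `∫ J = π / s`. -/
theorem integral_norm_mul_J_le {s : ℝ} (hs : 0 < s) (F : 𝓢(ℝ, ℂ)) :
    ∫ ξ : ℝ, ‖F ξ‖ * (1 + (s * ξ) ^ 2)⁻¹ ≤ L2norm F * Real.sqrt (Real.pi / s) := by
  have hJ0 : ∀ ξ : ℝ, 0 ≤ (1 + (s * ξ) ^ 2)⁻¹ := fun ξ => by positivity
  have hJ1 : ∀ ξ : ℝ, (1 + (s * ξ) ^ 2)⁻¹ ≤ 1 := fun ξ =>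
    inv_le_one_of_one_le₀ (by nlinarith [sq_nonneg (s * ξ)])
  have hJJ : ∀ ξ : ℝ, ((1 + (s * ξ) ^ 2)⁻¹) ^ 2 ≤ (1 + (s * ξ) ^ 2)⁻¹ := fun ξ => by
    nlinarith [hJ0 ξ, hJ1 ξ]
  have hJm : AEStronglyMeasurable (fun ξ : ℝ => (1 + (s * ξ) ^ 2)⁻¹) :=
    (integrable_J hs).aestronglyMeasurable
  have hJ2 : Integrable fun ξ : ℝ => ((1 + (s * ξ) ^ 2)⁻¹) ^ 2 :=
    (integrable_J hs).mono' (hJm.pow 2) (Filter.Eventually.of_forall fun ξ => by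
      rw [Real.norm_of_nonneg (sq_nonneg _)]; exact hJJ ξ)
  have hCS := integral_mul_le_Lp_mul_Lq_of_nonneg (μ := volume) Real.HolderConjugate.two_two
    (f := fun ξ => ‖F ξ‖) (g := fun ξ : ℝ => (1 + (s * ξ) ^ 2)⁻¹)
    (Filter.Eventually.of_forall fun ξ => norm_nonneg _) (Filter.Eventually.of_forall hJ0)
    (by simpa using (F.memLp 2).norm)
    (by simpa using (memLp_two_iff_integrable_sq hJm).2 hJ2)
  simp only [Real.rpow_two, ← Real.sqrt_eq_rpow] at hCS
  refine hCS.trans (mul_le_mul_of_nonneg_left (Real.sqrt_le_sqrt ?_) (Real.sqrt_nonneg _))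
  rw [← integral_J hs]
  exact integral_mono hJ2 (integrable_J hs) hJJ

/-- One integration by parts against the phase `φ(ξ) = xξ + tξ³`, whose derivative
`φ' = x (1 + (sξ)²)`, `s = √(3t/x)`, does not vanish for `x > 0`. -/
theorem nonstationary {t x : ℝ} (ht : 0 < t) (hx : 0 < x) (H : 𝓢(ℝ, ℂ)) (M : ℝ)
    (hM : ∀ ξ, ‖H ξ‖ ≤ M) :
    ‖∫ ξ : ℝ, cexp (I * x * ξ + I * t * ξ ^ 3) * H ξ‖ ≤
      x⁻¹ * (L2norm (deriv H) * Real.sqrt (Real.pi / Real.sqrt (3 * t / x)) + M * Real.pi) := by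
  set s := Real.sqrt (3 * t / x) with hs_def
  have hs : 0 < s := Real.sqrt_pos.2 (by positivity)
  have hs2 : x * s ^ 2 = 3 * t := by
    rw [hs_def, Real.sq_sqrt (by positivity)]; field_simp
  let H' : 𝓢(ℝ, ℂ) := SchwartzMap.derivCLM ℂ ℂ H
  have hH' : (H' : ℝ → ℂ) = deriv H := funext fun x => SchwartzMap.derivCLM_apply ℂ H x
  have hHd : ∀ ξ, HasDerivAt H (H' ξ) ξ := fun ξ => by
    rw [hH']; exact H.differentiableAt.hasDerivAt
  let J : ℝ → ℝ := fun ξ => (1 + (s * ξ) ^ 2)⁻¹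
  have hJpos : ∀ ξ, 0 < J ξ := fun ξ => by simp only [J]; positivity
  have hJinv : ∀ ξ, J ξ * (1 + (s * ξ) ^ 2) = 1 := fun ξ => by
    simp only [J]; exact inv_mul_cancel₀ (by positivity)
  have hJ1 : ∀ ξ, J ξ ≤ 1 := fun ξ =>
    inv_le_one_of_one_le₀ (by nlinarith [sq_nonneg (s * ξ)])
  have hJcont : Continuous J := by
    refine Continuous.inv₀ (by fun_prop) fun ξ => by positivity
  have hJd : ∀ ξ, HasDerivAt J (-(2 * s ^ 2 * ξ) * J ξ ^ 2) ξ := by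
    intro ξ
    have h1 : HasDerivAt (fun ξ : ℝ => 1 + (s * ξ) ^ 2) (2 * s ^ 2 * ξ) ξ := by
      have := (((hasDerivAt_id ξ).const_mul s).pow 2).const_add 1
      convert! this using 1
      simp; ring
    convert! h1.inv (by positivity) using 1
    simp only [J, inv_pow]; ring
  -- The amplitude `H / (i φ')` equals `(i x)⁻¹ J H`.
  let v : ℝ → ℂ := fun ξ => cexp (I * x * ξ + I * t * ξ ^ 3)
  let v' : ℝ → ℂ := fun ξ => v ξ * (I * x + I * t * (3 * ξ ^ 2))
  let a : ℝ → ℂ := fun ξ => (I * x)⁻¹ * ((J ξ : ℂ) * H ξ)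
  let a' : ℝ → ℂ := fun ξ =>
    (I * x)⁻¹ * (((-(2 * s ^ 2 * ξ) * J ξ ^ 2 : ℝ) : ℂ) * H ξ + (J ξ : ℂ) * H' ξ)
  have hxC : (x : ℂ) ≠ 0 := by exact_mod_cast hx.ne'
  have hv : ∀ ξ, HasDerivAt v (v' ξ) ξ := by
    intro ξ
    have hid : HasDerivAt (fun y : ℝ => (y : ℂ)) 1 ξ := (hasDerivAt_id ξ).ofReal_comp
    have h1 := (hid.const_mul (I * x)).add ((hid.pow 3).const_mul (I * t))
    convert! h1.cexp using 1
    simp [v', v]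
  have ha : ∀ ξ, HasDerivAt a (a' ξ) ξ := fun ξ =>
    (((hJd ξ).ofReal_comp).mul (hHd ξ)).const_mul _
  have hav' : ∀ ξ, a ξ * v' ξ = v ξ * H ξ := by
    intro ξ
    have e1 : (I * x + I * t * (3 * (ξ:ℂ) ^ 2)) = (I * x) * ((1 + (s * ξ) ^ 2 : ℝ) : ℂ) := by
      have : (x : ℂ) * (s : ℂ) ^ 2 = 3 * t := by exact_mod_cast hs2
      push_cast
      linear_combination (-I * (ξ : ℂ) ^ 2) * this
    have e2 : (J ξ : ℂ) * ((1 + (s * ξ) ^ 2 : ℝ) : ℂ) = 1 := by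
      rw [← Complex.ofReal_mul, hJinv]; simp
    have e3 : (I * (x:ℂ))⁻¹ * (I * x) = 1 := inv_mul_cancel₀ (mul_ne_zero I_ne_zero hxC)
    simp only [a, v', e1]
    linear_combination (v ξ * H ξ * (J ξ : ℂ) * ((1 + (s * ξ) ^ 2 : ℝ) : ℂ)) * e3 +
      (v ξ * H ξ) * e2
  have hvn : ∀ ξ, ‖v ξ‖ = 1 := by
    intro ξ
    have : I * x * ξ + I * t * (ξ:ℂ) ^ 3 = ((x * ξ + t * ξ ^ 3 : ℝ) : ℂ) * I := by
      push_cast; ring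
    simp only [v, this, Complex.norm_exp_ofReal_mul_I]
  have hvc : Continuous v := by simp only [v]; fun_prop
  have hv'c : Continuous v' := by simp only [v']; fun_prop
  have hJc : Continuous fun ξ => (J ξ : ℂ) := by fun_prop
  have hac : Continuous a := by
    have := H.continuous
    simp only [a]; fun_prop
  have ha'c : Continuous a' := by
    have := H.continuous
    have := H'.continuous
    simp only [a']; fun_prop
  have hin : ‖(I * (x:ℂ))⁻¹‖ = x⁻¹ := by simp [abs_of_pos hx]
  have hab : ∀ ξ, ‖a ξ‖ ≤ x⁻¹ * ‖H ξ‖ := by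
    intro ξ
    simp only [a, norm_mul, hin, Complex.norm_real, Real.norm_of_nonneg (hJpos ξ).le]
    gcongr
    exact mul_le_of_le_one_left (norm_nonneg _) (hJ1 ξ)
  -- `2 |sξ| J ≤ 1` turns the derivative of `J` into `s J`.
  have ha'b : ∀ ξ, ‖a' ξ‖ ≤ x⁻¹ * (‖H' ξ‖ * J ξ + M * s * J ξ) := by
    intro ξ
    have hk : |(-(2 * s ^ 2 * ξ) * J ξ ^ 2)| ≤ s * J ξ := by
      rw [abs_mul, abs_neg, abs_of_nonneg (sq_nonneg (J ξ)), abs_mul,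
        abs_of_nonneg (by positivity : 0 ≤ 2 * s ^ 2)]
      have h1 : 2 * (s * |ξ|) ≤ 1 + (s * ξ) ^ 2 := by
        have : (s * ξ) ^ 2 = (s * |ξ|) ^ 2 := by rw [mul_pow, mul_pow, sq_abs]
        rw [this]
        nlinarith [sq_nonneg (s * |ξ| - 1)]
      have h2 : J ξ * (2 * (s * |ξ|)) ≤ 1 :=
        (mul_le_mul_of_nonneg_left h1 (hJpos ξ).le).trans (hJinv ξ).le
      calc 2 * s ^ 2 * |ξ| * J ξ ^ 2 = (s * J ξ) * (J ξ * (2 * (s * |ξ|))) := by ring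
        _ ≤ (s * J ξ) * 1 := mul_le_mul_of_nonneg_left h2 (mul_pos hs (hJpos ξ)).le
        _ = s * J ξ := mul_one _
    simp only [a']
    rw [norm_mul, hin]
    refine mul_le_mul_of_nonneg_left ((norm_add_le _ _).trans ?_) (by positivity)
    rw [norm_mul, norm_mul, Complex.norm_real, Complex.norm_real, Real.norm_eq_abs,
      Real.norm_of_nonneg (hJpos ξ).le]
    have := mul_le_mul hk (hM ξ) (norm_nonneg _) (mul_pos hs (hJpos ξ)).le
    linarith
  have hJint : Integrable J := integrable_J hs
  have hH'J : Integrable fun ξ => ‖H' ξ‖ * J ξ :=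
    H'.integrable.norm.mono' (by fun_prop) (Filter.Eventually.of_forall fun ξ => by
      rw [Real.norm_of_nonneg (mul_nonneg (norm_nonneg _) (hJpos ξ).le)]
      exact mul_le_of_le_one_right (norm_nonneg _) (hJ1 ξ))
  have hbound : Integrable fun ξ => x⁻¹ * (‖H' ξ‖ * J ξ + M * s * J ξ) :=
    (hH'J.add (hJint.const_mul (M * s))).const_mul _
  have ha'int : Integrable (a' * v) :=
    hbound.mono' (ha'c.mul hvc).aestronglyMeasurable (Filter.Eventually.of_forall fun ξ => by
      simpa [hvn] using ha'b ξ)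
  have haint : Integrable (a * v) :=
    (H.integrable.norm.const_mul x⁻¹).mono' (hac.mul hvc).aestronglyMeasurable
      (Filter.Eventually.of_forall fun ξ => by simpa [hvn] using hab ξ)
  have hav'int : Integrable (a * v') :=
    H.integrable.norm.mono' (hac.mul hv'c).aestronglyMeasurable
      (Filter.Eventually.of_forall fun ξ => by
        simp only [Pi.mul_apply, hav', norm_mul, hvn, one_mul, le_refl])
  have hibp := integral_mul_deriv_eq_deriv_mul_of_integrable (u := a) (v := v) (u' := a')
    (v' := v') (fun ξ _ => ha ξ) (fun ξ _ => hv ξ) hav'int ha'int haint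
  simp_rw [hav'] at hibp
  change ‖∫ ξ, v ξ * H ξ‖ ≤ _
  rw [hibp, norm_neg]
  calc ‖∫ ξ, a' ξ * v ξ‖ ≤ ∫ ξ, x⁻¹ * (‖H' ξ‖ * J ξ + M * s * J ξ) :=
        norm_integral_le_of_norm_le hbound (Filter.Eventually.of_forall fun ξ => by
          simpa [hvn] using ha'b ξ)
    _ = x⁻¹ * ((∫ ξ, ‖H' ξ‖ * J ξ) + M * s * (Real.pi / s)) := by
        rw [integral_const_mul, integral_add hH'J (hJint.const_mul _), integral_const_mul]
        simp only [J]
        rw [integral_J hs]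
    _ ≤ _ := by
        have h1 := integral_norm_mul_J_le hs H'
        rw [hH'] at h1
        have h2 : M * s * (Real.pi / s) = M * Real.pi := by field_simp
        rw [h2, ← hH'] at *
        gcongr

/-! ### From the X-norm to the pointwise bound -/

theorem L2norm_nonneg (g : ℝ → ℂ) : 0 ≤ L2norm g := Real.sqrt_nonneg _

theorem H1norm_nonneg (g : ℝ → ℂ) : 0 ≤ H1norm g := Real.sqrt_nonneg _

theorem L2norm_le_H1norm (g : ℝ → ℂ) : L2norm g ≤ H1norm g :=
  Real.le_sqrt_of_sq_le (by nlinarith [sq_nonneg (L2norm (deriv g))])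

/-- The pointwise bound at a fixed time, before rewriting it in the self-similar variable. Only the
`‖x f‖_{H¹}` and `‖f̂‖_{L^∞}` parts of the X-norm enter; the supremum in `LinfNorm` is a genuine
one because `f̂` is Schwartz, hence bounded. -/
theorem u_bound {δ α ε t x : ℝ} (u : ℝ → ℝ → ℝ) (ht : 0 < t) (hx : 0 < x) (g : 𝓢(ℝ, ℝ))
    (hg : ∀ x, u t x = g x) (hX : Xexpr δ α u t ≤ ε) :
    |u t x| ≤ x⁻¹ * (ε * t ^ ((1:ℝ)/6) * Real.sqrt (Real.pi / Real.sqrt (3 * t / x))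
      + ε * Real.pi) := by
  let G : 𝓢(ℝ, ℂ) := SchwartzMap.postcompCLM Complex.ofRealCLM g
  have hG : ∀ x, (u t x : ℂ) = G x := fun x => by
    rw [hg]; exact (SchwartzMap.postcompCLM_apply Complex.ofRealCLM g x).symm
  obtain ⟨H, hH⟩ := exists_schwartz_profFT u t G hG
  have hpos : ∀ r : ℝ, 0 < t ^ r := fun r => Real.rpow_pos_of_pos ht r
  have hbdd : BddAbove (Set.range fun ξ => ‖profFT u t ξ‖) := by
    simp_rw [hH]
    obtain ⟨C, -, hC⟩ := H.decay 0 0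
    exact ⟨C, by rintro _ ⟨ξ, rfl⟩; simpa using hC ξ⟩
  have hLinf : 0 ≤ LinfNorm (profFT u t) := Real.iSup_nonneg fun _ => norm_nonneg _
  have n1 := mul_nonneg (hpos (-δ)).le (H1norm_nonneg (fun x => (u t x : ℂ)))
  have n2 := mul_nonneg (hpos (-(1:ℝ)/6)).le (H1norm_nonneg (fun x => (x : ℂ) * prof u t x))
  have n3 := mul_nonneg (hpos (α/3 - 1/6)).le
    (L2norm_nonneg (fun ξ => ((|ξ| ^ α : ℝ) : ℂ) * FT (fun x => (x : ℂ) * prof u t x) ξ))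
  rw [Xexpr] at hX
  have hM : ∀ ξ, ‖H ξ‖ ≤ ε := fun ξ => by
    rw [← hH]
    exact (le_ciSup hbdd ξ).trans (by change LinfNorm (profFT u t) ≤ ε; linarith)
  have hL2 : L2norm (deriv H) ≤ ε * t ^ ((1:ℝ)/6) := by
    rw [← L2norm_mul_prof u t H hH]
    refine (L2norm_le_H1norm _).trans ?_
    have h := mul_le_mul_of_nonneg_right
      (show t ^ (-(1:ℝ)/6) * H1norm (fun x => (x : ℂ) * prof u t x) ≤ ε by linarith)
      (hpos ((1:ℝ)/6)).le
    rwa [mul_right_comm, ← Real.rpow_add ht, show -(1:ℝ)/6 + 1/6 = 0 by norm_num,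
      Real.rpow_zero, one_mul] at h
  have hε : 0 ≤ ε := (norm_nonneg _).trans (hM 0)
  have hu : (u t x : ℂ) = (Real.sqrt (2 * Real.pi) : ℂ)⁻¹ *
      ∫ ξ : ℝ, cexp (I * x * ξ + I * t * ξ ^ 3) * H ξ := by
    rw [hG, inversion]
    congr 2
    funext ξ
    have : (G : ℝ → ℂ) = fun x => (u t x : ℂ) := funext fun x => (hG x).symm
    rw [← hH, profFT, this, Complex.exp_add, mul_assoc (cexp (I * x * ξ)), ← mul_assoc (cexp (I * t * ξ ^ 3)),
      ← Complex.exp_add, add_neg_cancel, Complex.exp_zero, one_mul]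
  have hsq : (Real.sqrt (2 * Real.pi))⁻¹ ≤ 1 :=
    inv_le_one_of_one_le₀ (Real.one_le_sqrt.2 (by nlinarith [Real.pi_gt_three]))
  have habs : |u t x| = ‖(u t x : ℂ)‖ := by rw [Complex.norm_real, Real.norm_eq_abs]
  rw [habs, hu, norm_mul, norm_inv, Complex.norm_real, Real.norm_of_nonneg (Real.sqrt_nonneg _)]
  refine (mul_le_of_le_one_left (norm_nonneg _) hsq).trans
    ((nonstationary ht hx H ε hM).trans ?_)
  gcongr

/-- Proposition 2.6 (decay in the region ahead of the wave, x ≥ t^{1/3}). -/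
theorem mkdv_decay_front :
    ∃ C : ℝ, 0 < C ∧ ∃ δ α : ℝ, 0 < δ ∧ 0 < α ∧ α < 1/2 ∧
      ∃ ε' : ℝ, 0 < ε' ∧
        ∀ ε₁ : ℝ, 0 < ε₁ → ε₁ ≤ ε' →
          ∀ u : ℝ → ℝ → ℝ, IsMKdVOn u (Set.Ici 0) →
            XLE δ α u ε₁ →
            ∀ t : ℝ, 2 ≤ t → ∀ x : ℝ, t ^ ((1:ℝ)/3) ≤ x →
              |u t x| ≤ C * ε₁ * t ^ (-(1:ℝ)/3) * (x / t ^ ((1:ℝ)/3)) ^ (-(3:ℝ)/4) := by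
  -- The bound holds with the same constant for every choice of `δ`, `α` and `ε'`.
  refine ⟨2 + Real.pi, by positivity, 1/100, 49/100, by norm_num, by norm_num, by norm_num, 1, one_pos,
    ?_⟩
  intro ε hε _ u hu hX t ht x hx
  have ht0 : 0 < t := by linarith
  have hx0 : 0 < x := (Real.rpow_pos_of_pos ht0 _).trans_le hx
  obtain ⟨g, hg⟩ := hu.2.1 t (Set.mem_Ici.2 ht0.le)
  refine (u_bound u ht0 hx0 g hg (hX t (by linarith))).trans ?_
  -- `y = x / t^{1/3}` is the self-similar variable, so `3 t / x = 3 t^{2/3} / y`.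
  set τ := t ^ ((1:ℝ)/3) with hτ_def
  have hτ : 0 < τ := Real.rpow_pos_of_pos ht0 _
  set y := x / τ with hy_def
  have hy1 : 1 ≤ y := (one_le_div hτ).2 hx
  have hy : 0 < y := by linarith
  have hxy : x = τ * y := by rw [hy_def]; field_simp
  have hτ3 : t = τ ^ 3 := by
    rw [hτ_def, ← Real.rpow_natCast, ← Real.rpow_mul ht0.le]; norm_num
  have hτm : t ^ (-(1:ℝ)/3) = τ⁻¹ := by
    rw [hτ_def, ← Real.rpow_neg ht0.le]; norm_num
  have hτ6 : t ^ ((1:ℝ)/6) = Real.sqrt τ := by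
    rw [hτ_def, Real.sqrt_eq_rpow, ← Real.rpow_mul ht0.le]; norm_num
  have hsplit : y ^ (-(3:ℝ)/4) = y⁻¹ * y ^ ((1:ℝ)/4) := by
    rw [← Real.rpow_neg_one y, ← Real.rpow_add hy]; norm_num
  have hy4 : 1 ≤ y ^ ((1:ℝ)/4) := Real.one_le_rpow hy1 (by norm_num)
  have hy44 : (y ^ ((1:ℝ)/4)) ^ 4 = y := by
    rw [← Real.rpow_natCast, ← Real.rpow_mul hy.le]; norm_num
  set q := y ^ ((1:ℝ)/4) with hq
  have hroot : Real.sqrt τ * Real.sqrt (Real.pi / Real.sqrt (3 * t / x)) ≤ 2 * q := by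
    -- `3 t / x = 3 (τ / q²)² ≥ (τ / q²)²`
    have h1 : τ / q ^ 2 ≤ Real.sqrt (3 * t / x) := by
      apply Real.le_sqrt_of_sq_le
      have : 3 * t / x = 3 * (τ / q ^ 2) ^ 2 := by
        rw [hxy, ← hy44, hτ3]; field_simp
      rw [this]
      nlinarith [sq_nonneg (τ / q ^ 2)]
    have hq0 : 0 < q := by linarith
    rw [← Real.sqrt_mul hτ.le]
    apply Real.sqrt_le_iff.2 ⟨by positivity, ?_⟩
    calc τ * (Real.pi / Real.sqrt (3 * t / x)) ≤ τ * (Real.pi / (τ / q ^ 2)) := by gcongr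
      _ = Real.pi * q ^ 2 := by field_simp
      _ ≤ 4 * q ^ 2 := by gcongr; exact Real.pi_le_four
      _ = (2 * q) ^ 2 := by ring
  rw [hτm, hτ6, hsplit]
  have hxinv : x⁻¹ = τ⁻¹ * y⁻¹ := by rw [hxy, mul_inv]
  have hmain : ε * Real.sqrt τ * Real.sqrt (Real.pi / Real.sqrt (3 * t / x)) + ε * Real.pi
      ≤ (2 + Real.pi) * ε * q := by
    have h1 := mul_le_mul_of_nonneg_left hroot hε.le
    have h2 : ε * Real.pi * 1 ≤ ε * Real.pi * q :=
      mul_le_mul_of_nonneg_left hy4 (by positivity)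
    nlinarith
  calc _ ≤ x⁻¹ * ((2 + Real.pi) * ε * q) := mul_le_mul_of_nonneg_left hmain (by positivity)
    _ = _ := by rw [hxinv]; ring
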